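/- arXiv:2205.00799 — 10 statements merged into one kernel-verified Lean document; each statement's English description precedes it below -/
import Mathlib

section
/- Let N ≥ 2 be an integer and let A, B : Fin N → ℝ be preference vectors (nonnegative entries, each summing to 1). If the popularity S i = A i + B i satisfies S i ≤ 1 for every arm i, then there exists a joint selection probability matrix P (P i i = 0, P i j ≥ 0, total sum 1) whose row sums equal A and whose column sums equal B; that is, the loss L(P) is zero. -/
/-- Theorem 1 (zero-loss case): if every popularity `A i + B i` is at most 1, there exists a
conflict-free joint selection probability matrix whose row sums equal `A` and whose column sums
equal `B`, i.e. the loss is zero. -/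
theorem zero_loss_of_popularity_le_one
    (N : ℕ) (hN : 2 ≤ N) (A B : Fin N → ℝ)
    (hA0 : ∀ i, 0 ≤ A i) (hB0 : ∀ i, 0 ≤ B i)
    (hA1 : ∑ i, A i = 1) (hB1 : ∑ i, B i = 1)
    (hS : ∀ i, A i + B i ≤ 1) :
    ∃ P : Fin N → Fin N → ℝ,
      (∀ i, P i i = 0) ∧ (∀ i j, 0 ≤ P i j) ∧ (∑ i, ∑ j, P i j = 1) ∧
      (∀ i, ∑ j, P i j = A i) ∧ (∀ j, ∑ i, P i j = B j) := by
  -- minimise the trace over the (compact) transportation polytope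
  let K : Set (Fin N → Fin N → ℝ) :=
    {P | (∀ i j, 0 ≤ P i j) ∧ (∀ i, ∑ j, P i j = A i) ∧ (∀ j, ∑ i, P i j = B j)}
  have hclosed : IsClosed K := by
    have h1 : IsClosed {P : Fin N → Fin N → ℝ | ∀ i j, 0 ≤ P i j} := by
      simp only [Set.ofPred_forall]
      exact isClosed_iInter fun i => isClosed_iInter fun j =>
        isClosed_le continuous_const (by fun_prop)
    have h2 : IsClosed {P : Fin N → Fin N → ℝ | ∀ i, ∑ j, P i j = A i} := by
      simp only [Set.ofPred_forall]
      exact isClosed_iInter fun i => isClosed_eq (by fun_prop) continuous_const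
    have h3 : IsClosed {P : Fin N → Fin N → ℝ | ∀ j, ∑ i, P i j = B j} := by
      simp only [Set.ofPred_forall]
      exact isClosed_iInter fun i => isClosed_eq (by fun_prop) continuous_const
    exact h1.inter (h2.inter h3)
  have hsub : K ⊆ Set.Icc (fun _ _ => 0) (fun i _ => A i) := by
    rintro P ⟨h0, hr, -⟩
    refine ⟨fun i j => h0 i j, fun i j => ?_⟩
    show P i j ≤ A i
    rw [← hr i]
    exact Finset.single_le_sum (f := fun j => P i j) (fun j _ => h0 i j) (Finset.mem_univ j)
  have hK : IsCompact K := isCompact_Icc.of_isClosed_subset hclosed hsub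
  have hne : K.Nonempty := by
    refine ⟨fun i j => A i * B j, fun i j => mul_nonneg (hA0 i) (hB0 j), fun i => ?_, fun j => ?_⟩
    · rw [← Finset.mul_sum, hB1, mul_one]
    · rw [← Finset.sum_mul, hA1, one_mul]
  obtain ⟨P, ⟨h0, hr, hc⟩, hmin⟩ := hK.exists_isMinOn hne
    (f := fun P : Fin N → Fin N → ℝ => ∑ i, P i i) (by fun_prop)
  have htot : ∑ i, ∑ j, P i j = 1 := by rw [← hA1]; exact Finset.sum_congr rfl fun i _ => hr i
  refine ⟨P, fun k => ?_, h0, htot, hr, hc⟩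
  by_contra hk
  have hkpos : 0 < P k k := lt_of_le_of_ne (h0 k k) (Ne.symm hk)
  have hz : ∀ i j, i ≠ k → j ≠ k → P i j = 0 := by
    intro i j hi hj
    by_contra hij
    have hijpos : 0 < P i j := lt_of_le_of_ne (h0 i j) (Ne.symm hij)
    obtain ⟨ε, hε, hε1, hε2⟩ : ∃ ε : ℝ, 0 < ε ∧ ε ≤ P k k ∧ ε ≤ P i j :=
      ⟨min (P k k) (P i j), lt_min hkpos hijpos, min_le_left _ _, min_le_right _ _⟩
    let w : Fin N → Fin N → ℝ := fun l a => (if a = k then 1 else 0) - (if a = l then 1 else 0)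
    have hw : ∀ l, ∑ a, w l a = 0 := by
      intro l
      simp [w, Finset.sum_sub_distrib]
    have hQ : (fun a b => P a b - ε * (w i a * w j b)) ∈ K := by
      refine ⟨fun a b => ?_, fun a => ?_, fun b => ?_⟩
      · show 0 ≤ P a b - ε * (w i a * w j b)
        by_cases hab : a = k ∧ b = k
        · obtain ⟨rfl, rfl⟩ := hab
          simp only [w, if_true, if_neg (Ne.symm hi), if_neg (Ne.symm hj)]
          linarith
        by_cases hab' : a = i ∧ b = j
        · obtain ⟨rfl, rfl⟩ := hab'
          simp only [w, if_true, if_neg hi, if_neg hj]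
          linarith
        have hneg : w i a * w j b ≤ 0 := by
          simp only [w]
          clear hmin hw
          split_ifs <;> first | (exfalso; simp_all; done) | norm_num
        have := h0 a b
        nlinarith
      · rw [Finset.sum_sub_distrib, ← Finset.mul_sum, ← Finset.mul_sum, hw, hr]; ring
      · rw [Finset.sum_sub_distrib, ← Finset.mul_sum, ← Finset.sum_mul, hw, hc]; ring
    have hle : ∑ a, P a a ≤ ∑ a, (P a a - ε * (w i a * w j a)) := hmin hQ
    rw [Finset.sum_sub_distrib, ← Finset.mul_sum] at hle
    have h1 : (1 : ℝ) ≤ ∑ a, w i a * w j a := by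
      calc (1 : ℝ) = ∑ a, (if a = k then 1 else 0) := by simp
        _ ≤ _ := by
          refine Finset.sum_le_sum fun a _ => ?_
          simp only [w]
          split_ifs <;> simp_all
    nlinarith
  have hrow : ∀ i, i ≠ k → A i = P i k := by
    intro i hi
    rw [← hr i]
    exact Finset.sum_eq_single k (fun j _ hj => hz i j hi hj) (by simp)
  have e1 := Finset.add_sum_erase Finset.univ A (Finset.mem_univ k)
  have e2 := Finset.add_sum_erase Finset.univ (fun i => P i k) (Finset.mem_univ k)
  have e3 : ∑ i ∈ Finset.univ.erase k, A i = ∑ i ∈ Finset.univ.erase k, P i k :=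
    Finset.sum_congr rfl fun i hi => hrow i (Finset.ne_of_mem_erase hi)
  have e4 := hc k
  have e5 := hS k
  linarith
end

section
/- Let N ≥ 2 be an integer, T ≥ 0 a real number, and let A, B : Fin N → ℝ be nonnegative vectors each summing to T. If A i + B i ≤ T for every index i, then there exists a matrix P : Fin N → Fin N → ℝ with P i i = 0 for all i and P i j ≥ 0 for all i, j, whose row sums equal A and whose column sums equal B. -/
theorem exists_zero_diag_matrix_of_popularity_le_total
    (N : ℕ) (hN : 2 ≤ N) (T : ℝ) (hT : 0 ≤ T) (A B : Fin N → ℝ)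
    (hA0 : ∀ i, 0 ≤ A i) (hB0 : ∀ i, 0 ≤ B i)
    (hA : ∑ i, A i = T) (hB : ∑ i, B i = T)
    (hS : ∀ i, A i + B i ≤ T) :
    ∃ P : Fin N → Fin N → ℝ,
      (∀ i, P i i = 0) ∧ (∀ i j, 0 ≤ P i j) ∧
      (∀ i, ∑ j, P i j = A i) ∧ (∀ j, ∑ i, P i j = B j) := by
  -- minimise the trace over the transport polytope `K`
  let K : Set (Fin N → Fin N → ℝ) := {P | (∀ i j, 0 ≤ P i j) ∧
      (∀ i, ∑ j, P i j = A i) ∧ (∀ j, ∑ i, P i j = B j)}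
  have hclosed : IsClosed K := by
    refine IsClosed.and ?_ (IsClosed.and ?_ ?_)
    · simp only [Set.ofPred_forall]
      exact isClosed_iInter fun i => isClosed_iInter fun j =>
        isClosed_le (by fun_prop) (by fun_prop)
    · simp only [Set.ofPred_forall]
      exact isClosed_iInter fun i => isClosed_eq (by fun_prop) (by fun_prop)
    · simp only [Set.ofPred_forall]
      exact isClosed_iInter fun i => isClosed_eq (by fun_prop) (by fun_prop)
  have hcompact : IsCompact K := by
    refine IsCompact.of_isClosed_subset
      (isCompact_univ_pi fun i => isCompact_univ_pi fun _ => isCompact_Icc (a := 0) (b := A i))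
      hclosed ?_
    intro P hP i _ j _
    refine ⟨hP.1 i j, ?_⟩
    rw [← hP.2.1 i]
    exact Finset.single_le_sum (f := fun j => P i j) (fun j _ => hP.1 i j) (Finset.mem_univ j)
  have hne : K.Nonempty := by
    refine ⟨fun i j => A i * B j / T, fun i j => div_nonneg (mul_nonneg (hA0 i) (hB0 j)) hT,
      fun i => ?_, fun j => ?_⟩
    · rw [← Finset.sum_div, ← Finset.mul_sum, hB]
      by_cases h : T = 0
      · have := hS i; have := hA0 i; have := hB0 i
        simp [h]; linarith
      · field_simp
    · rw [← Finset.sum_div, ← Finset.sum_mul, hA]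
      by_cases h : T = 0
      · have := hS j; have := hA0 j; have := hB0 j
        simp [h]; linarith
      · field_simp
  obtain ⟨P, hP, hmin⟩ := hcompact.exists_isMinOn hne
    (f := fun P => ∑ i, P i i) (by fun_prop)
  obtain ⟨h0, hr, hc⟩ := hP
  refine ⟨P, fun k => ?_, h0, hr, hc⟩
  by_contra hk
  have hkpos : 0 < P k k := lt_of_le_of_ne (h0 k k) (Ne.symm hk)
  -- otherwise swapping lowers the trace
  have hz : ∀ i j, i ≠ k → j ≠ k → P i j = 0 := by
    intro i j hi hj
    by_contra hij
    have hijpos : 0 < P i j := lt_of_le_of_ne (h0 i j) (Ne.symm hij)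
    obtain ⟨e, hepos, he1, he2⟩ : ∃ e, 0 < e ∧ e ≤ P k k ∧ e ≤ P i j :=
      ⟨min (P k k) (P i j), lt_min hkpos hijpos, min_le_left _ _, min_le_right _ _⟩
    let u : Fin N → ℝ := fun a => (if a = k then 1 else 0) - (if a = i then 1 else 0)
    let v : Fin N → ℝ := fun a => (if a = k then 1 else 0) - (if a = j then 1 else 0)
    have hu : ∑ a, u a = 0 := by simp [u]
    have hv : ∑ a, v a = 0 := by simp [v]
    have hQ : (fun a b => P a b - e * (u a * v b)) ∈ K := by
      refine ⟨fun a b => ?_, fun a => ?_, fun b => ?_⟩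
      · have hab := h0 a b
        simp only [u, v]
        by_cases a1 : a = k
        · subst a1
          by_cases b1 : b = a
          · subst b1
            simp only [hi.symm, hj.symm, if_true, if_false]
            linarith
          · simp only [hi.symm, b1, if_true, if_false]
            split_ifs <;> linarith
        · by_cases a2 : a = i
          · subst a2
            by_cases b2 : b = j
            · subst b2
              simp only [hi, hj, if_true, if_false]
              linarith
            · simp only [hi, b2, if_true, if_false]
              split_ifs <;> linarith
          · simp only [a1, a2, if_false]
            linarith
      · rw [Finset.sum_sub_distrib, ← Finset.mul_sum, ← Finset.mul_sum, hv, hr]; simp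
      · rw [Finset.sum_sub_distrib, ← Finset.mul_sum, ← Finset.sum_mul, hu, hc]; simp
    have hle : ∑ a, P a a ≤ ∑ a, (P a a - e * (u a * v a)) := hmin hQ
    rw [Finset.sum_sub_distrib, ← Finset.mul_sum] at hle
    have huv : 0 < ∑ a, u a * v a := by
      refine Finset.sum_pos' (fun a _ => ?_) ⟨k, Finset.mem_univ k, ?_⟩
      · simp only [u, v]
        by_cases a1 : a = k
        · subst a1; simp [hi.symm, hj.symm]
        · simp only [a1, if_false]; split_ifs <;> norm_num
      · simp [u, v, hi.symm, hj.symm]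
    have := mul_pos hepos huv
    linarith
  have hcol : ∀ j, j ≠ k → P k j = B j := by
    intro j hj
    rw [← hc j]
    exact (Finset.sum_eq_single k (fun i _ hi => hz i j hi hj) (by simp)).symm
  have h1 : A k = P k k + ∑ j ∈ Finset.univ.erase k, B j := by
    rw [← hr k, ← Finset.add_sum_erase _ _ (Finset.mem_univ k)]
    congr 1
    exact Finset.sum_congr rfl fun j hj => hcol j (Finset.ne_of_mem_erase hj)
  have h2 : B k + ∑ j ∈ Finset.univ.erase k, B j = T := by
    rw [Finset.add_sum_erase _ _ (Finset.mem_univ k), hB]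
  have := hS k
  linarith
end

section
/- Let n ≥ 4 be an integer, T ≥ 0 a real number, and A, B : Fin n → ℝ nonnegative vectors each summing to T with S i = A i + B i ≤ T for every i. Let K be an index attaining the minimum of S. Then there exist vectors q, r : Fin n → ℝ (the K-th row and K-th column of a joint selection matrix) such that: q and r are nonnegative, q K = 0 and r K = 0, ∑ j, q j = A K, ∑ i, r i = B K, q j ≤ B j for every j ≠ K, r i ≤ A i for every i ≠ K, and (A i − r i) + (B i − q i) ≤ T − S K for every i ≠ K. -/
lemma exists_fill {n : ℕ} (c : Fin n → ℝ) (hc : ∀ i, 0 ≤ c i) (K i : Fin n) (hi : i ≠ K)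
    (a : ℝ) (ha : 0 ≤ a) (h : a + c K ≤ ∑ j, c j) :
    ∃ q : Fin n → ℝ, (∀ j, 0 ≤ q j) ∧ q K = 0 ∧ ∑ j, q j = a ∧
      (∀ j, j ≠ K → q j ≤ c j) ∧ q i = min a (c i) := by
  by_cases hac : a ≤ c i
  · refine ⟨Pi.single i a, ?_, ?_, ?_, ?_, ?_⟩
    · intro j
      by_cases hj : j = i
      · subst hj; simpa using ha
      · simp [hj]
    · simp [hi.symm]
    · simp
    · intro j _
      by_cases hj : j = i
      · subst hj; simpa using hac
      · simpa [hj] using hc j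
    · simp [hac]
  · have hac' : c i < a := lt_of_not_ge hac
    have split : ∀ f : Fin n → ℝ,
        ∑ j, f j = f K + (f i + ∑ j ∈ (Finset.univ.erase K).erase i, f j) := by
      intro f
      rw [Finset.add_sum_erase _ f (by simp [hi]), Finset.add_sum_erase _ f (by simp)]
    set R := ∑ j ∈ (Finset.univ.erase K).erase i, c j with hR
    have h1 := split c
    have hRa : a - c i ≤ R := by linarith
    have hR0 : 0 < R := by linarith
    have ht0 : 0 ≤ (a - c i) / R := div_nonneg (by linarith) hR0.le
    have ht1 : (a - c i) / R ≤ 1 := (div_le_one hR0).2 hRa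
    refine ⟨fun j => if j = K then 0 else if j = i then c i else c j * ((a - c i) / R),
      ?_, ?_, ?_, ?_, ?_⟩
    · intro j
      dsimp only
      split_ifs
      · exact le_rfl
      · exact hc i
      · exact mul_nonneg (hc j) ht0
    · simp
    · rw [split]
      have h2 : ∑ j ∈ (Finset.univ.erase K).erase i,
          (if j = K then 0 else if j = i then c i else c j * ((a - c i) / R))
          = ∑ j ∈ (Finset.univ.erase K).erase i, c j * ((a - c i) / R) := by
        apply Finset.sum_congr rfl
        intro j hj
        simp only [Finset.mem_erase] at hj
        simp [hj.1, hj.2.1]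
      rw [h2, ← Finset.sum_mul, ← hR, mul_div_cancel₀ _ hR0.ne']
      simp [hi]
    · intro j hj
      dsimp only
      rw [if_neg hj]
      split_ifs with hji
      · rw [hji]
      · exact mul_le_of_le_one_right (hc j) ht1
    · simp [hi, hac'.le]

/-- Assumption 2.1 holds: there exist a `K`-th row `q` and a `K`-th column `r` satisfying all the
required conditions, where `K` is the arm with the lowest popularity `S i = A i + B i`. -/
theorem exists_Kth_row_and_column
    (n : ℕ) (hn : 4 ≤ n) (T : ℝ) (hT : 0 ≤ T) (A B : Fin n → ℝ)
    (hA0 : ∀ i, 0 ≤ A i) (hB0 : ∀ i, 0 ≤ B i)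
    (hA : ∑ i, A i = T) (hB : ∑ i, B i = T)
    (hS : ∀ i, A i + B i ≤ T)
    (K : Fin n) (hK : ∀ i, A K + B K ≤ A i + B i) :
    ∃ q r : Fin n → ℝ,
      (∀ j, 0 ≤ q j) ∧ (∀ i, 0 ≤ r i) ∧
      q K = 0 ∧ r K = 0 ∧
      (∑ j, q j = A K) ∧ (∑ i, r i = B K) ∧
      (∀ j, j ≠ K → q j ≤ B j) ∧
      (∀ i, i ≠ K → r i ≤ A i) ∧
      (∀ i, i ≠ K → (A i - r i) + (B i - q i) ≤ T - (A K + B K)) := by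
  have hne : (Finset.univ.erase K : Finset (Fin n)).Nonempty := by
    rw [← Finset.card_pos, Finset.card_erase_of_mem (Finset.mem_univ K)]
    simp; omega
  obtain ⟨i, hi, hmax⟩ := Finset.exists_max_image _ (fun i => A i + B i) hne
  have hi : i ≠ K := (Finset.mem_erase.1 hi).1
  have hSK := hS K
  have pair : ∀ f : Fin n → ℝ, (∀ j, 0 ≤ f j) → f K + f i ≤ ∑ j, f j := by
    intro f hf
    rw [← Finset.sum_pair hi.symm]
    exact Finset.sum_le_sum_of_subset_of_nonneg (Finset.subset_univ _) (fun j _ _ => hf j)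
  obtain ⟨q, q0, qK, qs, qB, qi⟩ := exists_fill B hB0 K i hi (A K) (hA0 K) (by linarith)
  obtain ⟨r, r0, rK, rs, rA, ri⟩ := exists_fill A hA0 K i hi (B K) (hB0 K) (by linarith)
  refine ⟨q, r, q0, r0, qK, rK, qs, rs, qB, rA, ?_⟩
  intro j hj
  by_cases hji : j = i
  · subst hji
    rw [qi, ri]
    have hpA := pair A hA0
    have hpB := pair B hB0
    have := hS j
    have := hK j
    rcases min_cases (A K) (B j) with ⟨e, _⟩ | ⟨e, _⟩ <;>
    rcases min_cases (B K) (A j) with ⟨e', _⟩ | ⟨e', _⟩ <;> rw [e, e'] <;> linarith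
  · obtain ⟨l, hl⟩ : ∃ l, l ∉ ({K, i, j} : Finset (Fin n)) := by
      by_contra! hcon
      have h3 : (Finset.univ : Finset (Fin n)).card ≤ ({K, i, j} : Finset (Fin n)).card :=
        Finset.card_le_card (fun x _ => hcon x)
      have := Finset.card_le_three (a := K) (b := i) (c := j)
      simp only [Finset.card_univ, Fintype.card_fin] at h3
      omega
    have h4 : ∑ x ∈ insert l ({K, i, j} : Finset (Fin n)), (A x + B x) ≤ ∑ x, (A x + B x) :=
      Finset.sum_le_sum_of_subset_of_nonneg (Finset.subset_univ _)
        (fun x _ _ => add_nonneg (hA0 x) (hB0 x))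
    rw [Finset.sum_insert hl, Finset.sum_insert (by simp [hi.symm, Ne.symm hj]),
      Finset.sum_pair (Ne.symm hji), Finset.sum_add_distrib, hA, hB] at h4
    have h5 := hmax j (by simp [hj])
    have h6 := hK l
    have := q0 j
    have := r0 j
    linarith
end

section
/- Let n ≥ 4 be an integer, T ≥ 0 a real number, and A, B : Fin n → ℝ nonnegative vectors each summing to T with S i = A i + B i ≤ T for every i. Let K attain the minimum of S, let V attain the maximum of S, with K ≠ V, and suppose A K ≤ B V and B K ≤ A V. Then the vectors q, r : Fin n → ℝ defined by q V = A K, r V = B K, and q j = r j = 0 for all j ≠ V satisfy: q, r nonnegative, q K = r K = 0, ∑ j, q j = A K, ∑ i, r i = B K, q j ≤ B j for all j ≠ K, r i ≤ A i for all i ≠ K, and (A i − r i) + (B i − q i) ≤ T − S K for all i ≠ K. -/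
/-- Case 1 of the verification of Assumption 2.1: when `A K ≤ B V` and `B K ≤ A V`, placing all
of `A K` at position `(K, V)` and all of `B K` at position `(V, K)` satisfies every condition. -/
theorem case_one_construction
    (n : ℕ) (hn : 4 ≤ n) (T : ℝ) (hT : 0 ≤ T) (A B : Fin n → ℝ)
    (hA0 : ∀ i, 0 ≤ A i) (hB0 : ∀ i, 0 ≤ B i)
    (hA : ∑ i, A i = T) (hB : ∑ i, B i = T)
    (hS : ∀ i, A i + B i ≤ T)
    (K V : Fin n) (hKV : K ≠ V)
    (hK : ∀ i, A K + B K ≤ A i + B i)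
    (hV : ∀ i, A i + B i ≤ A V + B V)
    (hAKBV : A K ≤ B V) (hBKAV : B K ≤ A V) :
    let q : Fin n → ℝ := fun j => if j = V then A K else 0
    let r : Fin n → ℝ := fun i => if i = V then B K else 0
    (∀ j, 0 ≤ q j) ∧ (∀ i, 0 ≤ r i) ∧
    q K = 0 ∧ r K = 0 ∧
    (∑ j, q j = A K) ∧ (∑ i, r i = B K) ∧
    (∀ j, j ≠ K → q j ≤ B j) ∧
    (∀ i, i ≠ K → r i ≤ A i) ∧
    (∀ i, i ≠ K → (A i - r i) + (B i - q i) ≤ T - (A K + B K)) := by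
  intro q r
  refine ⟨?_, ?_, ?_, ?_, ?_, ?_, ?_, ?_, ?_⟩
  · intro j
    simp only [q]
    split_ifs
    · exact hA0 K
    · exact le_rfl
  · intro j
    simp only [r]
    split_ifs
    · exact hB0 K
    · exact le_rfl
  · simp [q, hKV]
  · simp [r, hKV]
  · simp [q]
  · simp [r]
  · intro j _
    simp only [q]
    split_ifs with h
    · rw [h]; exact hAKBV
    · exact hB0 j
  · intro j _
    simp only [r]
    split_ifs with h
    · rw [h]; exact hBKAV
    · exact hA0 j
  · intro i hi
    simp only [q, r]
    split_ifs with h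
    · have := hS i
      linarith
    · obtain ⟨m, hm⟩ : ∃ m, m ∉ ({i, K, V} : Finset (Fin n)) := by
        by_contra! hall
        have h1 : (Finset.univ : Finset (Fin n)) ⊆ {i, K, V} := fun x _ => hall x
        have h2 := Finset.card_le_card h1
        have h3 := Finset.card_le_three (a := i) (b := K) (c := V)
        rw [Finset.card_univ, Fintype.card_fin] at h2
        omega
      have hsum : ∑ x ∈ insert m ({i, K, V} : Finset (Fin n)), (A x + B x)
          ≤ ∑ x, (A x + B x) :=
        Finset.sum_le_sum_of_subset_of_nonneg (Finset.subset_univ _)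
          (fun x _ _ => add_nonneg (hA0 x) (hB0 x))
      rw [Finset.sum_insert hm, Finset.sum_insert (by simp [hi, h]),
        Finset.sum_pair hKV, Finset.sum_add_distrib, hA, hB] at hsum
      have := hK m
      have := hV i
      linarith
end

section
/- Let N ≥ 2 be an integer and let A, B : Fin N → ℝ be preference vectors (nonnegative entries, each summing to 1). Let m be an index with S m = max over i of S i and suppose S m > 1. Then the value (N / (2 * (N − 1))) * (S m − 1)² is the minimum of the loss L(P) over all joint selection probability matrices P; that is, every such P satisfies L(P) ≥ (N / (2 * (N − 1))) * (S m − 1)², and some such P attains this value. -/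
open Finset in
lemma aux_sum_sq {N : ℕ} (hN : 2 ≤ N) (m : Fin N) (x : Fin N → ℝ) (hx : ∑ i, x i = 0) :
    (N : ℝ) / ((N : ℝ) - 1) * (x m) ^ 2 ≤ ∑ i, (x i) ^ 2 := by
  have hN' : (2 : ℝ) ≤ N := by exact_mod_cast hN
  have hpos : (0 : ℝ) < (N : ℝ) - 1 := by linarith
  have h1 := Finset.add_sum_erase univ x (mem_univ m)
  have h2 := Finset.add_sum_erase univ (fun i => x i ^ 2) (mem_univ m)
  have h3 := sq_sum_le_card_mul_sum_sq (s := univ.erase m) (f := x)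
  have hc : (((univ.erase m).card : ℕ) : ℝ) = (N : ℝ) - 1 := by
    rw [card_erase_of_mem (mem_univ m), card_univ, Fintype.card_fin, Nat.cast_sub (by omega)]
    simp
  rw [hc] at h3
  have h4 : ∑ i ∈ univ.erase m, x i = - x m := by linarith
  rw [h4] at h3
  rw [div_mul_eq_mul_div, div_le_iff₀ hpos, ← h2]
  nlinarith

open Finset in
lemma aux_marg {N : ℕ} (m : Fin N) (P : Fin N → Fin N → ℝ)
    (h0 : ∀ i, P i i = 0) (hP : ∀ i j, 0 ≤ P i j) (h1 : ∑ i, ∑ j, P i j = 1) :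
    ∑ j, P m j + ∑ i, P i m ≤ 1 := by
  have a := Finset.add_sum_erase univ (fun i => ∑ j, P i j) (mem_univ m)
  have b := Finset.add_sum_erase univ (fun i => P i m) (mem_univ m)
  have c : ∑ i ∈ univ.erase m, P i m ≤ ∑ i ∈ univ.erase m, ∑ j, P i j :=
    sum_le_sum fun i _ => single_le_sum (f := fun j => P i j) (fun j _ => hP i j) (mem_univ m)
  simp only [h0] at a b
  linarith

open Finset in
lemma aux_ite {N : ℕ} (m : Fin N) (c : ℝ) (f : Fin N → ℝ) :
    ∑ i, (if i = m then c else f i) = c + (∑ i, f i - f m) := by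
  have a := Finset.add_sum_erase univ (fun i => if i = m then c else f i) (mem_univ m)
  have b := Finset.add_sum_erase univ f (mem_univ m)
  have e : ∑ i ∈ univ.erase m, (if i = m then c else f i) = ∑ i ∈ univ.erase m, f i :=
    sum_congr rfl fun i hi => if_neg (ne_of_mem_erase hi)
  rw [e] at a
  simp only [if_true] at a
  linarith

/-- Theorem 2.2: if the maximum popularity `S m = A m + B m` exceeds 1, then the minimum loss over
all conflict-free joint selection probability matrices equals `N / (2 (N − 1)) · (S m − 1)²`:
every matrix has loss at least this value, and some matrix attains it. -/
theorem min_loss_eq_of_popularity_gt_one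
    (N : ℕ) (hN : 2 ≤ N) (A B : Fin N → ℝ)
    (hA0 : ∀ i, 0 ≤ A i) (hB0 : ∀ i, 0 ≤ B i)
    (hA1 : ∑ i, A i = 1) (hB1 : ∑ i, B i = 1)
    (m : Fin N) (hm : ∀ i, A i + B i ≤ A m + B m) (hSm : 1 < A m + B m) :
    (∀ P : Fin N → Fin N → ℝ,
        (∀ i, P i i = 0) → (∀ i j, 0 ≤ P i j) → (∑ i, ∑ j, P i j = 1) →
        (N : ℝ) / (2 * ((N : ℝ) - 1)) * (A m + B m - 1) ^ 2 ≤
          (∑ i, ((∑ j, P i j) - A i) ^ 2 + ∑ j, ((∑ i, P i j) - B j) ^ 2)) ∧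
    (∃ P : Fin N → Fin N → ℝ,
        (∀ i, P i i = 0) ∧ (∀ i j, 0 ≤ P i j) ∧ (∑ i, ∑ j, P i j = 1) ∧
        (∑ i, ((∑ j, P i j) - A i) ^ 2 + ∑ j, ((∑ i, P i j) - B j) ^ 2) =
          (N : ℝ) / (2 * ((N : ℝ) - 1)) * (A m + B m - 1) ^ 2) := by
  have hN' : (2 : ℝ) ≤ N := by exact_mod_cast hN
  have hpos : (0 : ℝ) < (N : ℝ) - 1 := by linarith
  constructor
  · intro P h0 hP h1
    have hx := aux_sum_sq hN m (fun i => (∑ j, P i j) - A i)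
      (by rw [Finset.sum_sub_distrib, h1, hA1, sub_self])
    have hy := aux_sum_sq hN m (fun j => (∑ i, P i j) - B j)
      (by rw [Finset.sum_sub_distrib, Finset.sum_comm, h1, hB1, sub_self])
    have hmm := aux_marg m P h0 hP h1
    refine le_trans ?_ (add_le_add hx hy)
    have e : (N : ℝ) / (2 * ((N : ℝ) - 1)) = (N : ℝ) / ((N : ℝ) - 1) * (1 / 2) := by
      field_simp
    rw [e, ← mul_add, mul_assoc]
    apply mul_le_mul_of_nonneg_left _ (by positivity)
    generalize (∑ j, P m j) = p at *
    generalize (∑ i, P i m) = q at *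
    nlinarith [sq_nonneg ((p - A m) - (q - B m))]
  · obtain ⟨c, hc⟩ : ∃ c : ℝ, c = (A m + B m - 1) / (2 * ((N : ℝ) - 1)) := ⟨_, rfl⟩
    have hc0 : 0 ≤ c := by rw [hc]; apply div_nonneg <;> linarith
    have hc1 : A m + B m - 1 = 2 * ((N : ℝ) - 1) * c := by rw [hc]; field_simp
    have hrow : ∀ i, ∑ j, (if i = m then (if j = m then 0 else B j + c)
        else if j = m then A i + c else 0) = if i = m then A m - (N - 1) * c else A i + c := by
      intro i
      by_cases hi : i = m
      · simp only [hi, if_true]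
        rw [aux_ite, Finset.sum_add_distrib, hB1]
        simp
        linarith
      · simp [hi]
    have hcol : ∀ j, ∑ i, (if i = m then (if j = m then 0 else B j + c)
        else if j = m then A i + c else 0) = if j = m then B m - (N - 1) * c else B j + c := by
      intro j
      by_cases hj : j = m
      · simp only [hj, if_true]
        rw [aux_ite, Finset.sum_add_distrib, hA1]
        simp
        linarith
      · simp [hj]
    have hloss : ∀ X : Fin N → ℝ, ∑ i, ((if i = m then X m - (N - 1) * c else X i + c) - X i) ^ 2
        = ((N - 1) * c) ^ 2 + (N - 1) * c ^ 2 := by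
      intro X
      have : ∀ i, ((if i = m then X m - (N - 1) * c else X i + c) - X i) ^ 2
          = if i = m then ((N - 1) * c) ^ 2 else c ^ 2 := by
        intro i
        by_cases hi : i = m
        · simp only [hi, if_true]; ring
        · simp only [hi, if_false]; ring
      simp only [this]
      rw [aux_ite]
      simp
      ring
    refine ⟨fun i j => if i = m then (if j = m then 0 else B j + c)
        else if j = m then A i + c else 0, ?_, ?_, ?_, ?_⟩
    · intro i
      by_cases hi : i = m <;> simp [hi]
    · intro i j
      have := hA0 i
      have := hB0 j
      dsimp only
      split_ifs <;> linarith
    · simp only [hrow]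
      rw [aux_ite, Finset.sum_add_distrib, hA1]
      simp
      ring
    · simp only [hrow, hcol, hloss]
      rw [hc1]
      field_simp
      ring
end

section
/- Let N ≥ 2 be an integer and let A, B : Fin N → ℝ be preference vectors (nonnegative entries, each summing to 1) with S i ≤ S (N−1) for all i (the last arm is most popular) and S (N−1) > 1. Set ε = (S (N−1) − 1) / (2 * (N − 1)) and define the matrix P̃ by P̃ i (N−1) = A i + ε for i ≠ N−1, P̃ (N−1) j = B j + ε for j ≠ N−1, and P̃ i j = 0 otherwise. Then P̃ is a joint selection probability matrix (zero diagonal, nonnegative entries, total sum 1) and its loss equals L(P̃) = (N / (2 * (N − 1))) * (S (N−1) − 1)². -/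
lemma sum_ite_last_aux {N : ℕ} (last : Fin N) (c : ℝ) (f : Fin N → ℝ) :
    ∑ i, (if i = last then c else f i) = c + ∑ i, f i - f last := by
  have h : ∀ i, (if i = last then c else f i) = f i + (if i = last then c - f last else 0) := by
    intro i
    split_ifs with h
    · subst h; ring
    · ring
  rw [Finset.sum_congr rfl (fun i _ => h i), Finset.sum_add_distrib]
  simp
  ring

/-- The explicit optimal satisfaction matrix: when the last arm is the most popular and its
popularity exceeds 1, the matrix `P̃` with `P̃ i (N−1) = A i + ε`, `P̃ (N−1) j = B j + ε`
(off the diagonal) and zeros elsewhere, where `ε = (S (N−1) − 1) / (2 (N − 1))`, is a valid joint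
selection probability matrix whose loss equals `N / (2 (N − 1)) · (S (N−1) − 1)²`. -/
theorem optimal_satisfaction_matrix
    (N : ℕ) (hN : 2 ≤ N) (A B : Fin N → ℝ)
    (hA0 : ∀ i, 0 ≤ A i) (hB0 : ∀ i, 0 ≤ B i)
    (hA1 : ∑ i, A i = 1) (hB1 : ∑ i, B i = 1)
    (last : Fin N) (hlast : last = ⟨N - 1, by omega⟩)
    (hm : ∀ i, A i + B i ≤ A last + B last) (hSm : 1 < A last + B last) :
    let ε : ℝ := (A last + B last - 1) / (2 * ((N : ℝ) - 1))
    let P : Fin N → Fin N → ℝ := fun i j =>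
      if i ≠ last ∧ j = last then A i + ε
      else if i = last ∧ j ≠ last then B j + ε
      else 0
    (∀ i, P i i = 0) ∧ (∀ i j, 0 ≤ P i j) ∧ (∑ i, ∑ j, P i j = 1) ∧
    (∑ i, ((∑ j, P i j) - A i) ^ 2 + ∑ j, ((∑ i, P i j) - B j) ^ 2) =
      (N : ℝ) / (2 * ((N : ℝ) - 1)) * (A last + B last - 1) ^ 2 := by
  intro ε P
  have hN' : (2 : ℝ) ≤ N := by exact_mod_cast hN
  have hd : (N : ℝ) - 1 ≠ 0 := by linarith
  have hε : 0 ≤ ε := div_nonneg (by linarith) (by linarith)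
  have hεe : 2 * ((N : ℝ) - 1) * ε = A last + B last - 1 := by
    simp only [ε]; field_simp
  have hrow : ∀ i, ∑ j, P i j =
      if i = last then 1 - B last + ((N : ℝ) - 1) * ε else A i + ε := by
    intro i
    by_cases hi : i = last
    · have h : ∀ j, P i j = if j = last then 0 else B j + ε := by
        intro j; by_cases hj : j = last <;> simp [P, hi, hj]
      rw [Finset.sum_congr rfl (fun j _ => h j), sum_ite_last_aux, Finset.sum_add_distrib, hB1]
      simp [hi]; ring
    · have h : ∀ j, P i j = if j = last then A i + ε else 0 := by
        intro j; by_cases hj : j = last <;> simp [P, hi, hj]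
      rw [Finset.sum_congr rfl (fun j _ => h j)]
      simp [hi]
  have hcol : ∀ j, ∑ i, P i j =
      if j = last then 1 - A last + ((N : ℝ) - 1) * ε else B j + ε := by
    intro j
    by_cases hj : j = last
    · have h : ∀ i, P i j = if i = last then 0 else A i + ε := by
        intro i; by_cases hi : i = last <;> simp [P, hi, hj]
      rw [Finset.sum_congr rfl (fun i _ => h i), sum_ite_last_aux, Finset.sum_add_distrib, hA1]
      simp [hj]; ring
    · have h : ∀ i, P i j = if i = last then B j + ε else 0 := by
        intro i; by_cases hi : i = last <;> simp [P, hi, hj]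
      rw [Finset.sum_congr rfl (fun i _ => h i)]
      simp [hj]
  refine ⟨?_, ?_, ?_, ?_⟩
  · intro i
    by_cases hi : i = last <;> simp [P, hi]
  · intro i j
    have h1 := hA0 i
    have h2 := hB0 j
    simp only [P]
    split_ifs <;> linarith
  · rw [Finset.sum_congr rfl (fun i _ => hrow i), sum_ite_last_aux, Finset.sum_add_distrib, hA1]
    simp
    linarith
  · have h1 : ∀ i, ((∑ j, P i j) - A i) ^ 2 =
        if i = last then (((N : ℝ) - 1) * ε) ^ 2 else ε ^ 2 := by
      intro i
      rw [hrow]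
      split_ifs with hi
      · rw [hi, show 1 - B last + ((N : ℝ) - 1) * ε - A last = -(((N : ℝ) - 1) * ε) by linarith]
        ring
      · ring
    have h2 : ∀ j, ((∑ i, P i j) - B j) ^ 2 =
        if j = last then (((N : ℝ) - 1) * ε) ^ 2 else ε ^ 2 := by
      intro j
      rw [hcol]
      split_ifs with hj
      · rw [hj, show 1 - A last + ((N : ℝ) - 1) * ε - B last = -(((N : ℝ) - 1) * ε) by linarith]
        ring
      · ring
    rw [Finset.sum_congr rfl (fun i _ => h1 i), Finset.sum_congr rfl (fun i _ => h2 i),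
      sum_ite_last_aux, ← hεe]
    simp only [Finset.sum_const, Finset.card_univ, Fintype.card_fin, nsmul_eq_mul]
    field_simp
    ring
end

section
/- Let N ≥ 2 be an integer and let A, B : Fin N → ℝ be preference vectors (nonnegative entries, each summing to 1). Let m be an index with S m = max over i of S i and suppose S m > 1. Then every joint selection probability matrix P satisfies L(P) ≥ (N / (2 * (N − 1))) * (S m − 1)². -/
theorem helper_sq (N : ℕ) (hN : 2 ≤ N) (x : Fin N → ℝ) (hx : ∑ i, x i = 0) (m : Fin N) :
    (N : ℝ) * x m ^ 2 ≤ ((N : ℝ) - 1) * ∑ i, x i ^ 2 := by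
  have h1 := Finset.add_sum_erase Finset.univ x (Finset.mem_univ m)
  have h2 := Finset.add_sum_erase Finset.univ (fun i => x i ^ 2) (Finset.mem_univ m)
  have h3 := sq_sum_le_card_mul_sum_sq (s := Finset.univ.erase m) (f := x)
  have hc : (((Finset.univ.erase m).card : ℕ) : ℝ) = (N : ℝ) - 1 := by
    rw [Finset.card_erase_of_mem (Finset.mem_univ m), Finset.card_univ, Fintype.card_fin]
    push_cast [Nat.cast_sub (show 1 ≤ N by omega)]
    ring
  rw [hc] at h3
  have h4 : ∑ i ∈ Finset.univ.erase m, x i = - x m := by linarith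
  rw [h4] at h3
  rw [← h2]
  nlinarith

theorem helper_marg (N : ℕ) (m : Fin N) (P : Fin N → Fin N → ℝ)
    (hPdiag : ∀ i, P i i = 0) (hP0 : ∀ i j, 0 ≤ P i j)
    (hPsum : ∑ i, ∑ j, P i j = 1) : (∑ j, P m j) + (∑ i, P i m) ≤ 1 := by
  have h1 := Finset.add_sum_erase Finset.univ (fun i => ∑ j, P i j) (Finset.mem_univ m)
  have h2 := Finset.add_sum_erase Finset.univ (fun i => P i m) (Finset.mem_univ m)
  have h3 : ∑ i ∈ Finset.univ.erase m, P i m ≤ ∑ i ∈ Finset.univ.erase m, ∑ j, P i j :=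
    Finset.sum_le_sum fun i _ =>
      Finset.single_le_sum (f := fun j => P i j) (fun j _ => hP0 i j) (Finset.mem_univ m)
  have h4 := hPdiag m
  linarith

/-- Lower bound on the loss: if the maximum popularity `S m = A m + B m` exceeds 1, every
conflict-free joint selection probability matrix `P` has loss at least
`N / (2 (N − 1)) · (S m − 1)²`. -/
theorem loss_lower_bound_of_popularity_gt_one
    (N : ℕ) (hN : 2 ≤ N) (A B : Fin N → ℝ)
    (hA0 : ∀ i, 0 ≤ A i) (hB0 : ∀ i, 0 ≤ B i)
    (hA1 : ∑ i, A i = 1) (hB1 : ∑ i, B i = 1)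
    (m : Fin N) (hm : ∀ i, A i + B i ≤ A m + B m) (hSm : 1 < A m + B m)
    (P : Fin N → Fin N → ℝ)
    (hPdiag : ∀ i, P i i = 0) (hP0 : ∀ i j, 0 ≤ P i j)
    (hPsum : ∑ i, ∑ j, P i j = 1) :
    (N : ℝ) / (2 * ((N : ℝ) - 1)) * (A m + B m - 1) ^ 2 ≤
      ∑ i, ((∑ j, P i j) - A i) ^ 2 + ∑ j, ((∑ i, P i j) - B j) ^ 2 := by
  have hNr : (2 : ℝ) ≤ N := by exact_mod_cast hN
  have hx := helper_sq N hN (fun i => (∑ j, P i j) - A i)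
    (by rw [Finset.sum_sub_distrib, hPsum, hA1, sub_self]) m
  have hy := helper_sq N hN (fun j => (∑ i, P i j) - B j)
    (by rw [Finset.sum_sub_distrib, Finset.sum_comm, hPsum, hB1, sub_self]) m
  have hs := helper_marg N m P hPdiag hP0 hPsum
  have key : (A m + B m - 1) ^ 2 ≤
      2 * (((∑ j, P m j) - A m) ^ 2 + ((∑ i, P i m) - B m) ^ 2) := by
    have h1 : (A m + B m - 1) ^ 2 ≤ (A m + B m - ((∑ j, P m j) + (∑ i, P i m))) ^ 2 :=
      pow_le_pow_left₀ (by linarith) (by linarith) 2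
    nlinarith [sq_nonneg (((∑ j, P m j) - A m) - ((∑ i, P i m) - B m))]
  have hk := mul_le_mul_of_nonneg_left key (show (0 : ℝ) ≤ N by linarith)
  rw [div_mul_eq_mul_div, div_le_iff₀ (by linarith)]
  linarith
end

section
/- Let N ≥ 2 be an integer and let A, B : Fin N → ℝ be preference vectors (nonnegative entries, each summing to 1). If there exists an arm i with A i + B i > 1, then there is no joint selection probability matrix P (zero diagonal, nonnegative entries, total sum 1) whose row sums equal A and whose column sums equal B; that is, the loss L(P) cannot be zero. -/
/-- If some arm has popularity `A i + B i > 1`, then no conflict-free joint selection probability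
matrix achieves zero loss. -/
theorem no_zero_loss_of_popularity_gt_one
    (N : ℕ) (hN : 2 ≤ N) (A B : Fin N → ℝ)
    (hA0 : ∀ i, 0 ≤ A i) (hB0 : ∀ i, 0 ≤ B i)
    (hA1 : ∑ i, A i = 1) (hB1 : ∑ i, B i = 1)
    (i : Fin N) (hSi : 1 < A i + B i) :
    ¬ ∃ P : Fin N → Fin N → ℝ,
        (∀ k, P k k = 0) ∧ (∀ k l, 0 ≤ P k l) ∧ (∑ k, ∑ l, P k l = 1) ∧
        (∑ k, ((∑ l, P k l) - A k) ^ 2 + ∑ l, ((∑ k, P k l) - B l) ^ 2) = 0 := by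
  rintro ⟨P, hd, h0, h1, hL⟩
  have hx : 0 ≤ ∑ k, ((∑ l, P k l) - A k) ^ 2 := Finset.sum_nonneg fun _ _ => sq_nonneg _
  have hy : 0 ≤ ∑ l, ((∑ k, P k l) - B l) ^ 2 := Finset.sum_nonneg fun _ _ => sq_nonneg _
  have hx0 : ∑ k, ((∑ l, P k l) - A k) ^ 2 = 0 := by linarith
  have hy0 : ∑ l, ((∑ k, P k l) - B l) ^ 2 = 0 := by linarith
  have ha := (Finset.sum_eq_zero_iff_of_nonneg fun _ _ => sq_nonneg _).1 hx0 i (Finset.mem_univ i)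
  have hb := (Finset.sum_eq_zero_iff_of_nonneg fun _ _ => sq_nonneg _).1 hy0 i (Finset.mem_univ i)
  have ha' : ∑ l, P i l = A i := by
    have := pow_eq_zero_iff (two_ne_zero) |>.1 ha
    linarith
  have hb' : ∑ k, P k i = B i := by
    have := pow_eq_zero_iff (two_ne_zero) |>.1 hb
    linarith
  have key : ∑ k, ((if k = i then A i else 0) + P k i) ≤ ∑ k, ∑ l, P k l := by
    refine Finset.sum_le_sum fun k _ => ?_
    by_cases hk : k = i
    · subst hk
      simp [hd, ha']
    · simp only [hk, if_false, zero_add]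
      exact Finset.single_le_sum (f := fun l => P k l) (fun l _ => h0 k l) (Finset.mem_univ i)
  rw [Finset.sum_add_distrib, hb', h1] at key
  simp at key
  linarith
end

section
/- Let N ≥ 2 be an integer and A, B : Fin N → ℝ be preference vectors (nonnegative entries, each summing to 1). A joint selection probability matrix P with loss L(P) = 0 exists if and only if A i + B i ≤ 1 for every arm i. -/
/-- The total mass is the mass of row `k` plus that of column `k`, minus the corner entry, plus
the mass of the complementary block. -/
lemma total_split {N : ℕ} (P : Fin N → Fin N → ℝ) (k : Fin N) :
    ∑ i, ∑ j, P i j = ∑ j, P k j + ∑ i, P i k - P k k +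
      ∑ i ∈ Finset.univ.erase k, ∑ j ∈ Finset.univ.erase k, P i j := by
  have h1 := Finset.add_sum_erase Finset.univ (fun i => ∑ j, P i j) (Finset.mem_univ k)
  have h2 := Finset.add_sum_erase Finset.univ (fun i => P i k) (Finset.mem_univ k)
  have h3 : ∑ i ∈ Finset.univ.erase k, ∑ j, P i j = ∑ i ∈ Finset.univ.erase k, P i k +
      ∑ i ∈ Finset.univ.erase k, ∑ j ∈ Finset.univ.erase k, P i j := by
    rw [← Finset.sum_add_distrib]
    refine Finset.sum_congr rfl fun i _ => ?_
    exact (Finset.add_sum_erase Finset.univ (fun j => P i j) (Finset.mem_univ k)).symm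
  linarith

/-- Among the couplings of `A` and `B`, one has minimal trace. -/
lemma exists_min_trace {N : ℕ} (A B : Fin N → ℝ)
    (hA0 : ∀ i, 0 ≤ A i) (hB0 : ∀ i, 0 ≤ B i)
    (hA1 : ∑ i, A i = 1) (hB1 : ∑ i, B i = 1) :
    ∃ P : Fin N → Fin N → ℝ, ((∀ i j, 0 ≤ P i j) ∧ (∀ i, ∑ j, P i j = A i) ∧
      (∀ j, ∑ i, P i j = B j)) ∧ ∀ Q : Fin N → Fin N → ℝ, (∀ i j, 0 ≤ Q i j) →
        (∀ i, ∑ j, Q i j = A i) → (∀ j, ∑ i, Q i j = B j) → ∑ i, P i i ≤ ∑ i, Q i i := by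
  let S : Set (Fin N → Fin N → ℝ) := {P | (∀ i j, 0 ≤ P i j) ∧ (∀ i, ∑ j, P i j = A i) ∧
      (∀ j, ∑ i, P i j = B j)}
  have hne : S.Nonempty := by
    refine ⟨fun i j => A i * B j, fun i j => mul_nonneg (hA0 i) (hB0 j), fun i => ?_, fun j => ?_⟩
    · rw [← Finset.mul_sum, hB1, mul_one]
    · rw [← Finset.sum_mul, hA1, one_mul]
  have hcl : IsClosed S := by
    simp only [S, Set.ofPred_and, Set.ofPred_forall]
    refine IsClosed.inter ?_ (IsClosed.inter ?_ ?_)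
    · exact isClosed_iInter fun i => isClosed_iInter fun j =>
        isClosed_le (by fun_prop) (by fun_prop)
    · exact isClosed_iInter fun i => isClosed_eq (by fun_prop) (by fun_prop)
    · exact isClosed_iInter fun i => isClosed_eq (by fun_prop) (by fun_prop)
  have hsub : S ⊆ Set.Icc (fun _ _ => 0) (fun i _ => A i) := by
    rintro P ⟨h0, h1, -⟩
    refine ⟨fun i j => h0 i j, fun i j => ?_⟩
    change P i j ≤ A i
    rw [← h1 i]
    exact Finset.single_le_sum (f := fun j => P i j) (fun j _ => h0 i j) (Finset.mem_univ j)
  have hco : IsCompact S := isCompact_Icc.of_isClosed_subset hcl hsub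
  obtain ⟨P, hP, hmin⟩ := hco.exists_isMinOn hne
    (f := fun P : Fin N → Fin N → ℝ => ∑ i, P i i) (by fun_prop)
  exact ⟨P, hP, fun Q h0 h1 h2 => hmin (show Q ∈ S from ⟨h0, h1, h2⟩)⟩

/-- If a coupling has a positive diagonal entry at `k` and a positive entry at `(a, b)` off the
row and column of `k`, then its trace can be decreased. -/
lemma exists_smaller {N : ℕ} (P : Fin N → Fin N → ℝ) (h0 : ∀ i j, 0 ≤ P i j)
    (k a b : Fin N) (hak : a ≠ k) (hbk : b ≠ k) (hk : 0 < P k k) (hab : 0 < P a b) :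
    ∃ Q : Fin N → Fin N → ℝ, (∀ i j, 0 ≤ Q i j) ∧ (∀ i, ∑ j, Q i j = ∑ j, P i j) ∧
      (∀ j, ∑ i, Q i j = ∑ i, P i j) ∧ ∑ i, Q i i < ∑ i, P i i := by
  obtain ⟨e, he, hek, hea⟩ : ∃ e : ℝ, 0 < e ∧ e ≤ P k k ∧ e ≤ P a b :=
    ⟨min (P k k) (P a b), lt_min hk hab, min_le_left _ _, min_le_right _ _⟩
  let u : Fin N → ℝ := fun i => (if i = k then 1 else 0) - (if i = a then 1 else 0)
  let v : Fin N → ℝ := fun j => (if j = b then 1 else 0) - (if j = k then 1 else 0)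
  have hu : ∑ i, u i = 0 := by simp [u, Finset.sum_sub_distrib]
  have hv : ∑ i, v i = 0 := by simp [v, Finset.sum_sub_distrib]
  have hle : ∀ i, u i * v i ≤ 0 := by
    intro i
    simp only [u, v]
    split_ifs <;> simp_all
  have huv : ∑ i, u i * v i < 0 := by
    refine Finset.sum_neg' (fun i _ => hle i) ⟨k, Finset.mem_univ k, ?_⟩
    simp [u, v, hak.symm, hbk.symm]
  refine ⟨fun i j => P i j + e * (u i * v j), fun i j => ?_, fun i => ?_, fun j => ?_, ?_⟩
  · have := h0 i j
    simp only [u, v]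
    split_ifs <;> subst_vars <;> first | (exfalso; simp_all; done) | nlinarith
  · rw [Finset.sum_add_distrib, ← Finset.mul_sum, ← Finset.mul_sum, hv]; ring
  · rw [Finset.sum_add_distrib, ← Finset.mul_sum, ← Finset.sum_mul, hu]; ring
  · rw [Finset.sum_add_distrib, ← Finset.mul_sum]
    have := mul_neg_of_pos_of_neg he huv
    linarith

/-- Characterization of zero loss: a conflict-free joint selection probability matrix with zero
loss exists if and only if every popularity `A i + B i` is at most 1. -/
theorem zero_loss_iff_popularity_le_one
    (N : ℕ) (hN : 2 ≤ N) (A B : Fin N → ℝ)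
    (hA0 : ∀ i, 0 ≤ A i) (hB0 : ∀ i, 0 ≤ B i)
    (hA1 : ∑ i, A i = 1) (hB1 : ∑ i, B i = 1) :
    (∃ P : Fin N → Fin N → ℝ,
        (∀ k, P k k = 0) ∧ (∀ k l, 0 ≤ P k l) ∧ (∑ k, ∑ l, P k l = 1) ∧
        (∑ k, ((∑ l, P k l) - A k) ^ 2 + ∑ l, ((∑ k, P k l) - B l) ^ 2) = 0) ↔
      ∀ i, A i + B i ≤ 1 := by
  constructor
  · rintro ⟨P, hd, h0, h1, hL⟩ k
    have hx : 0 ≤ ∑ k, ((∑ l, P k l) - A k) ^ 2 := Finset.sum_nonneg fun _ _ => sq_nonneg _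
    have hy : 0 ≤ ∑ l, ((∑ k, P k l) - B l) ^ 2 := Finset.sum_nonneg fun _ _ => sq_nonneg _
    have hx0 : ∑ k, ((∑ l, P k l) - A k) ^ 2 = 0 := by linarith
    have hy0 : ∑ l, ((∑ k, P k l) - B l) ^ 2 = 0 := by linarith
    rw [Finset.sum_eq_zero_iff_of_nonneg fun _ _ => sq_nonneg _] at hx0 hy0
    have hxk := pow_eq_zero_iff (two_ne_zero) |>.1 (hx0 k (Finset.mem_univ k))
    have hyk := pow_eq_zero_iff (two_ne_zero) |>.1 (hy0 k (Finset.mem_univ k))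
    have hs := total_split P k
    have hr : 0 ≤ ∑ i ∈ Finset.univ.erase k, ∑ j ∈ Finset.univ.erase k, P i j :=
      Finset.sum_nonneg fun i _ => Finset.sum_nonneg fun j _ => h0 i j
    have := hd k
    linarith
  · intro h
    obtain ⟨P, ⟨h0, hr, hc⟩, hmin⟩ := exists_min_trace A B hA0 hB0 hA1 hB1
    have ht : ∑ k, ∑ l, P k l = 1 := by simp only [hr, hA1]
    refine ⟨P, fun k => ?_, h0, ht, ?_⟩
    · by_contra hne
      have hk : 0 < P k k := lt_of_le_of_ne (h0 k k) (Ne.symm hne)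
      have hz : ∑ i ∈ Finset.univ.erase k, ∑ j ∈ Finset.univ.erase k, P i j = 0 := by
        refine Finset.sum_eq_zero fun a ha => Finset.sum_eq_zero fun b hb => ?_
        by_contra hab
        obtain ⟨Q, q0, qr, qc, qt⟩ := exists_smaller P h0 k a b (Finset.ne_of_mem_erase ha)
          (Finset.ne_of_mem_erase hb) hk (lt_of_le_of_ne (h0 a b) (Ne.symm hab))
        have := hmin Q q0 (fun i => (qr i).trans (hr i)) (fun j => (qc j).trans (hc j))
        linarith
      have hs := total_split P k
      have := h k
      rw [ht, hz, hr, hc] at hs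
      linarith
    · simp [hr, hc]
end

section
/- Let M ≥ 2 and N ≥ 1 be integers and let pref : Fin M → Fin N → ℝ be preference profiles for M players (pref x i ≥ 0 for all x, i and ∑ i, pref x i = 1 for each player x). If there exists an arm i with ∑ x, pref x i > 1, then there is no conflict-free joint selection tensor p such that for every player x and every arm i, the satisfied preference π x i equals pref x i. -/
/-- Theorem 2.3: with `M` players and `N` arms, if some arm's popularity `∑ x, pref x i` exceeds 1,
then no conflict-free joint selection tensor satisfies every player's preference exactly. -/
theorem no_zero_loss_tensor_of_popularity_gt_one
    (M N : ℕ) (hM : 2 ≤ M) (hN : 1 ≤ N)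
    (pref : Fin M → Fin N → ℝ)
    (hpref0 : ∀ x i, 0 ≤ pref x i)
    (hpref1 : ∀ x, ∑ i, pref x i = 1)
    (i : Fin N) (hSi : 1 < ∑ x, pref x i) :
    ¬ ∃ p : (Fin M → Fin N) → ℝ,
        (∀ d, 0 ≤ p d) ∧ (∑ d, p d = 1) ∧
        (∀ d, ¬ Function.Injective d → p d = 0) ∧
        (∀ x k, ∑ d ∈ Finset.univ.filter (fun d : Fin M → Fin N => d x = k), p d
          = pref x k) := by
  rintro ⟨p, hp0, hp1, hinj, hp⟩
  have h : ∑ x, pref x i ≤ ∑ d, p d := by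
    have e : ∑ x, pref x i = ∑ d : Fin M → Fin N, ∑ x, if d x = i then p d else 0 := by
      rw [Finset.sum_comm]
      refine Finset.sum_congr rfl fun x _ => ?_
      rw [← hp x i, Finset.sum_filter]
    rw [e]
    refine Finset.sum_le_sum fun d _ => ?_
    by_cases hd : Function.Injective d
    · by_cases hx : ∃ x, d x = i
      · obtain ⟨x, hx⟩ := hx
        rw [Finset.sum_eq_single x]
        · simp [hx]
        · intro y _ hy
          rw [if_neg]
          intro h
          exact hy (hd (h.trans hx.symm))
        · simp
      · push Not at hx
        simp [hx, hp0 d]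
    · simp [hinj d hd]
  linarith
end
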